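/- Let m ∈ ℕ, let r_i = (x_i, y_i) ∈ ℝ², and let (r_j, w_j)_{j∈N} be a finite family of nodes r_j = (x_j, y_j) ∈ ℝ² with real weights w_j. Write x_{ji} = x_j − x_i, y_{ji} = y_j − y_i. Assume the moment conditions: for every (a,b) ∈ ℕ × ℕ with 1 ≤ a + b ≤ m, ∑_{j∈N} w_j · x_{ji}^a · y_{ji}^b equals 1 if (a,b) = (1,0), and equals 0 otherwise. Then for every real polynomial P in two variables with total degree at most m, ∑_{j∈N} w_j · (P(r_j) − P(r_i)) = (∂P/∂x)(r_i). -/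

import Mathlib

open MvPolynomial

/-! Recentre `P` at `c`: with `Q(X) = P(X + c)`, the difference `P(r_j) - P(c)` is the sum of the
nonconstant terms of `Q` at `r_j - c`. Weighting and summing over the stencil turns each monomial
into a moment, and the moment conditions select the coefficient of `X_k` in `Q`, which is
`(∂P/∂X_k)(c)`. -/

section TaylorShift

variable {σ R : Type*} [CommSemiring R]

/-- The translation `P(X) ↦ P(X + c)`, whose coefficients are the Taylor coefficients of `P`
at `c`; unlike derivatives divided by factorials, they make sense over any semiring. -/
noncomputable def taylorShift (c : σ → R) : MvPolynomial σ R →ₐ[R] MvPolynomial σ R :=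
  aeval fun k => X k + C (c k)

theorem eval_taylorShift (c x : σ → R) (P : MvPolynomial σ R) :
    eval x (taylorShift c P) = eval (x + c) P := by
  induction P using MvPolynomial.induction_on with
  | C a => simp [taylorShift]
  | add p q hp hq => simp only [map_add, hp, hq]
  | mul_X p k hp => simp [taylorShift, ← hp]

theorem coeff_zero_taylorShift (c : σ → R) (P : MvPolynomial σ R) :
    coeff 0 (taylorShift c P) = eval c P := by
  simpa [eval_zero, constantCoeff_eq] using eval_taylorShift c 0 P

theorem pderiv_taylorShift (c : σ → R) (k : σ) (P : MvPolynomial σ R) :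
    pderiv k (taylorShift c P) = taylorShift c (pderiv k P) := by
  classical
  induction P using MvPolynomial.induction_on with
  | C a => simp [taylorShift]
  | add p q hp hq => simp only [map_add, hp, hq]
  | mul_X p l hp =>
    have hX : pderiv k (taylorShift c (X l)) = taylorShift c (pderiv k (X l)) := by
      obtain rfl | hl := eq_or_ne l k
      · simp [taylorShift]
      · simp [taylorShift, pderiv_X_of_ne hl]
    simp only [map_mul, map_add, pderiv_mul, hp, hX]

theorem coeff_single_taylorShift (c : σ → R) (k : σ) (P : MvPolynomial σ R) :
    coeff (Finsupp.single k 1) (taylorShift c P) = eval c (pderiv k P) :=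
  calc coeff (Finsupp.single k 1) (taylorShift c P)
      = coeff 0 (pderiv k (taylorShift c P)) := by simp [coeff_pderiv]
    _ = eval c (pderiv k P) := by rw [pderiv_taylorShift, coeff_zero_taylorShift]

theorem totalDegree_aeval_le {τ : Type*} {n : ℕ} {f : σ → MvPolynomial τ R}
    (hf : ∀ k, (f k).totalDegree ≤ n) (P : MvPolynomial σ R) :
    (aeval f P).totalDegree ≤ P.totalDegree * n := by
  rw [aeval_def, eval₂_eq]
  refine totalDegree_finsetSum_le fun d hd => ?_
  calc (algebraMap R _ (coeff d P) * ∏ k ∈ d.support, f k ^ d k).totalDegree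
      ≤ (∏ k ∈ d.support, f k ^ d k).totalDegree := by
        simpa [algebraMap_eq] using totalDegree_mul (C (coeff d P)) (∏ k ∈ d.support, f k ^ d k)
    _ ≤ ∑ k ∈ d.support, (f k ^ d k).totalDegree := totalDegree_finsetProd _ _
    _ ≤ ∑ k ∈ d.support, d k * n := Finset.sum_le_sum fun k _ =>
        (totalDegree_pow _ _).trans (Nat.mul_le_mul_left _ (hf k))
    _ = (d.sum fun _ e => e) * n := (Finset.sum_mul _ _ _).symm
    _ ≤ P.totalDegree * n := Nat.mul_le_mul_right _ (le_totalDegree hd)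

theorem totalDegree_taylorShift_le (c : σ → R) (P : MvPolynomial σ R) :
    (taylorShift c P).totalDegree ≤ P.totalDegree := by
  have hX (k : σ) : (X k + C (c k) : MvPolynomial σ R).totalDegree ≤ 1 :=
    (totalDegree_add _ _).trans <| max_le
      ((totalDegree_monomial_le (Finsupp.single k 1) 1).trans_eq (by simp)) (by simp)
  exact (totalDegree_aeval_le hX P).trans_eq (mul_one _)

end TaylorShift

section Stencil

variable {ι σ R : Type*} [CommRing R]

theorem eval_sub_eval_eq_sum_taylorShift [DecidableEq σ] (x c : σ → R) (P : MvPolynomial σ R) :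
    eval x P - eval c P = ∑ d ∈ (taylorShift c P).support.erase 0,
      coeff d (taylorShift c P) * d.prod fun k e => (x k - c k) ^ e := by
  have hx : eval x P = ∑ d ∈ (taylorShift c P).support,
      coeff d (taylorShift c P) * d.prod fun k e => (x k - c k) ^ e := by
    rw [← sub_add_cancel x c, ← eval_taylorShift, eval_eq, sub_add_cancel]
    rfl
  have hc : eval c P = coeff 0 (taylorShift c P) := (coeff_zero_taylorShift c P).symm
  rw [hx, hc, sub_eq_iff_eq_add]
  by_cases h0 : 0 ∈ (taylorShift c P).support
  · simp [← Finset.sum_erase_add _ _ h0]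
  · simp [notMem_support_iff.mp h0]

/-- The moment `∑ⱼ wⱼ (rⱼ - c)^d`, for a multi-index `d`, of the stencil with nodes `r j` and
weights `w j` (`j ∈ N`) about the point `c`. -/
def stencilMoment (N : Finset ι) (w : ι → R) (r : ι → σ → R) (c : σ → R) (d : σ →₀ ℕ) : R :=
  ∑ j ∈ N, w j * d.prod fun k e => (r j k - c k) ^ e

theorem sum_mul_eval_sub_eval [DecidableEq σ] (N : Finset ι) (w : ι → R) (r : ι → σ → R)
    (c : σ → R) (P : MvPolynomial σ R) :
    ∑ j ∈ N, w j * (eval (r j) P - eval c P) = ∑ d ∈ (taylorShift c P).support.erase 0,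
      coeff d (taylorShift c P) * stencilMoment N w r c d := by
  simp only [eval_sub_eval_eq_sum_taylorShift, stencilMoment, Finset.mul_sum]
  rw [Finset.sum_comm]
  exact Finset.sum_congr rfl fun d _ => Finset.sum_congr rfl fun j _ => mul_left_comm _ _ _

theorem explicit_labfm_consistency_dx_general [DecidableEq σ] (m : ℕ) (k : σ) (c : σ → R)
    (N : Finset ι) (r : ι → σ → R) (w : ι → R)
    (hmom : ∀ d : σ →₀ ℕ, d ≠ 0 → d.degree ≤ m →
      stencilMoment N w r c d = if d = Finsupp.single k 1 then 1 else 0)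
    (P : MvPolynomial σ R) (hP : P.totalDegree ≤ m) :
    ∑ j ∈ N, w j * (eval (r j) P - eval c P) = eval c (pderiv k P) := by
  set Q := taylorShift c P
  have hQ : ∀ d ∈ Q.support, d.degree ≤ m := fun d hd =>
    (le_totalDegree hd).trans ((totalDegree_taylorShift_le c P).trans hP)
  calc ∑ j ∈ N, w j * (eval (r j) P - eval c P)
      = ∑ d ∈ Q.support.erase 0, coeff d Q * stencilMoment N w r c d :=
        sum_mul_eval_sub_eval N w r c P
    _ = ∑ d ∈ Q.support.erase 0, coeff d Q * if d = Finsupp.single k 1 then 1 else 0 :=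
        Finset.sum_congr rfl fun d hd => by
          rw [hmom d (Finset.ne_of_mem_erase hd) (hQ d (Finset.mem_of_mem_erase hd))]
    _ = coeff (Finsupp.single k 1) Q := by simp +contextual [eq_comm]
    _ = eval c (pderiv k P) := coeff_single_taylorShift c k P

end Stencil

theorem stencilMoment_fin_two {ι R : Type*} [CommRing R] (N : Finset ι) (w x y : ι → R)
    (x₀ y₀ : R) (d : Fin 2 →₀ ℕ) :
    stencilMoment N w (fun j => ![x j, y j]) ![x₀, y₀] d =
      ∑ j ∈ N, w j * (x j - x₀) ^ d 0 * (y j - y₀) ^ d 1 := by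
  simp [stencilMoment, Finsupp.prod_fintype, mul_assoc]

theorem stencilMoment_fin_two_eq_ite {ι R : Type*} [CommRing R] {m : ℕ} {N : Finset ι}
    {w x y : ι → R} {x₀ y₀ : R}
    (hmom : ∀ a b : ℕ, 1 ≤ a + b → a + b ≤ m →
      ∑ j ∈ N, w j * (x j - x₀) ^ a * (y j - y₀) ^ b = if (a, b) = (1, 0) then 1 else 0)
    {d : Fin 2 →₀ ℕ} (hd : d ≠ 0) (hdm : d.degree ≤ m) :
    stencilMoment N w (fun j => ![x j, y j]) ![x₀, y₀] d =
      if d = Finsupp.single 0 1 then 1 else 0 := by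
  have hdeg : d.degree = d 0 + d 1 := by rw [Finsupp.degree_eq_sum, Fin.sum_univ_two]
  have hpos : 1 ≤ d.degree := Nat.one_le_iff_ne_zero.mpr (mt (Finsupp.degree_eq_zero_iff d).mp hd)
  have hsingle : (d 0, d 1) = (1, 0) ↔ d = Finsupp.single 0 1 := by
    simp [Finsupp.ext_iff, Fin.forall_fin_two]
  rw [stencilMoment_fin_two, hmom _ _ (hdeg ▸ hpos) (hdeg ▸ hdm)]
  simp only [hsingle]

/-- Explicit LABFM consistency for the first derivative in `x`. -/
theorem explicit_labfm_consistency_dx {ιN : Type*} (m : ℕ) (xi yi : ℝ)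
    (N : Finset ιN) (xj yj w : ιN → ℝ)
    (hmom : ∀ a b : ℕ, 1 ≤ a + b → a + b ≤ m →
      ∑ j ∈ N, w j * (xj j - xi) ^ a * (yj j - yi) ^ b =
        if (a, b) = (1, 0) then (1 : ℝ) else 0) :
    ∀ P : MvPolynomial (Fin 2) ℝ, P.totalDegree ≤ m →
      ∑ j ∈ N, w j * (eval ![xj j, yj j] P - eval ![xi, yi] P) =
        eval ![xi, yi] (pderiv 0 P) := by
  exact explicit_labfm_consistency_dx_general m 0 ![xi, yi] N (fun j => ![xj j, yj j]) w
    fun _ hd hdm => stencilMoment_fin_two_eq_ite hmom hd hdm
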